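/- Let i ∈ {1,…,n} be an index such that G_i(𝛉_i) is a nonzero square in K(𝛉_i). Then there is a finite set S of prime ideals, depending only on K, 𝔯 and 𝔉, such that whenever 𝔴 is divisible by every prime in S and by 2𝔯·∏_j F_j(1,0)·∏_{j≠k}Res(F_j,F_k), the following holds: for all s, t ∈ O_K with sO_K + tO_K = 𝔯, Σ_{𝔡 | F_i(s,t)^♭} (G_i(s,t)/𝔡) = τ_K(F_i(s,t)^♭), where τ_K is the divisor function on nonzero integral ideals. -/

import Mathlib

/-!
Write `f(x) = F_i(x,1)` and `g(x) = G_i(x,1)`. The hypothesis gives `g(θ) = h(θ)²` with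
`h ∈ K[x]` and `g(θ) ≠ 0`. As `F_i` is irreducible, `f` generates the ideal of polynomials
vanishing at `θ` (`dehomogenize_dvd_of_root`), so `f ∣ h² - g` and `f, g` are coprime in `K[x]`.
Clearing denominators (`exists_integral_identities`) yields nonzero `D, E ∈ O_K` and identities
`D² g = H² - f Q` and `U f + V g = E` in `O_K[x]`. The exceptional set consists of the primes
dividing `D E`.

Let `𝔭 ∤ 𝔴` divide `F_i(s,t)`. Then `t` is a unit modulo `𝔭`: otherwise
`F_i(s,t) ≡ F_i(1,0) s ^ deg F_i` would force `s ∈ 𝔭`, hence `𝔭 ∣ 𝔯`. So `s/t` is a root of `f`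
modulo `𝔭`, and the identities show that `g(s/t)` is a nonzero square modulo `𝔭`; since `deg G_i`
is even, so is `G_i(s,t)` (`legendreSymK_eq_one`). Every Legendre symbol occurring in the sum is
therefore `1`, and the sum counts the divisors of `F_i(s,t)^♭`. When `F_i(s,t) = 0` the encoding
gives `F_i(s,t)^♭ = 1` and the same argument applies vacuously.
-/

open NumberField UniqueFactorizationMonoid Classical MvPolynomial Pointwise

noncomputable section

variable (K : Type*) [Field K] [NumberField K]

/-- `K_∞ = K ⊗_ℚ ℝ`, identified with the mixed space `ℝ^{r₁} × ℂ^{r₂}`. -/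
abbrev KInfty := NumberField.mixedEmbedding.mixedSpace K

/-- The quadratic residue (Legendre) symbol of `a ∈ O_K` modulo a prime ideal `𝔭`. -/
def legendreSymK (a : 𝓞 K) (p : Ideal (𝓞 K)) : ℤ :=
  if a ∈ p then 0 else if ∃ b : 𝓞 K, b ^ 2 - a ∈ p then 1 else -1

/-- The Jacobi symbol `(a/𝔟)` of `K`: the product of Legendre symbols over the prime
factorization of `𝔟` (with multiplicity). -/
def jacobiSymK (a : 𝓞 K) (b : Ideal (𝓞 K)) : ℤ :=
  ((normalizedFactors b).map (fun p => legendreSymK K a p)).prod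

/-- `𝔞^♭`: the product of `𝔭^{v_𝔭(𝔞)}` over the prime ideals `𝔭 ∤ 𝔴`. -/
def flatPart (w a : Ideal (𝓞 K)) : Ideal (𝓞 K) :=
  ((normalizedFactors a).filter (fun p => ¬ p ∣ w)).prod

/-- `v_𝔭(𝔞)`: the exponent of the prime ideal `𝔭` in `𝔞`. -/
def vP (p a : Ideal (𝓞 K)) : ℕ := Multiset.count p (normalizedFactors a)

/-- The class `Z_K`: multiplicative functions on nonzero ideals, with values in `(−1,∞)`,
satisfying `f(𝔭) ≪_f 1/𝔑𝔭` for all primes `𝔭` and supported on squarefree ideals. -/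
def MemZK (f : Ideal (𝓞 K) → ℝ) : Prop :=
  f ⊤ = 1 ∧
  (∀ a b : Ideal (𝓞 K), a ≠ ⊥ → b ≠ ⊥ → a ⊔ b = ⊤ → f (a * b) = f a * f b) ∧
  (∀ a : Ideal (𝓞 K), a ≠ ⊥ → -1 < f a) ∧
  (∃ c : ℝ, 0 < c ∧ ∀ p : Ideal (𝓞 K), p.IsPrime → p ≠ ⊥ →
    |f p| ≤ c / (Ideal.absNorm p : ℝ)) ∧
  (∀ a : Ideal (𝓞 K), a ≠ ⊥ → ¬ Squarefree a → f a = 0)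

/-- `1_f(𝔞) = (1 ∗ f)(𝔞) = ∏_{𝔭 ∣ 𝔞} (1 + f(𝔭))` for `f` supported on squarefree ideals. -/
def oneStar (f : Ideal (𝓞 K) → ℝ) (a : Ideal (𝓞 K)) : ℝ :=
  ∏ p ∈ (normalizedFactors a).toFinset, (1 + f p)

/-- Evaluation `F(s,t)` of a binary form. -/
def evalForm (F : MvPolynomial (Fin 2) (𝓞 K)) (s t : 𝓞 K) : 𝓞 K :=
  MvPolynomial.eval ![s, t] F

/-- A system of binary forms `𝔉 = {(F_i, G_i) : 1 ≤ i ≤ n}`: each `F_i` is a binary form over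
`O_K`, irreducible over `K`, not dividing `G_i` in `K[s,t]`; the `F_i` are pairwise coprime
over `K` (no common non-unit factor); and each `G_i` has even degree. -/
structure SystemOfForms (n : ℕ) where
  F : Fin n → MvPolynomial (Fin 2) (𝓞 K)
  G : Fin n → MvPolynomial (Fin 2) (𝓞 K)
  dF : Fin n → ℕ
  dG : Fin n → ℕ
  F_homog : ∀ i, (F i).IsHomogeneous (dF i)
  G_homog : ∀ i, (G i).IsHomogeneous (dG i)
  dF_pos : ∀ i, 0 < dF i
  F_irred : ∀ i, Irreducible ((F i).map (algebraMap (𝓞 K) K))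
  F_not_dvd_G : ∀ i, ¬ ((F i).map (algebraMap (𝓞 K) K) ∣ (G i).map (algebraMap (𝓞 K) K))
  F_coprime : ∀ i j, i ≠ j → ∀ d : MvPolynomial (Fin 2) K,
      d ∣ (F i).map (algebraMap (𝓞 K) K) → d ∣ (F j).map (algebraMap (𝓞 K) K) → IsUnit d
  dG_even : ∀ i, Even (dG i)

/-- `G_i(𝛉_i)` is a nonzero square in `K(𝛉_i)`: if `F_i` is proportional to `t` then
`𝛉_i = (1,0)` and the condition reads `G_i(1,0) ∈ K^{×2}`; otherwise `𝛉_i = (θ_i,1)` for a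
root `θ_i` of `F_i(x,1)` and the condition reads `G_i(θ_i,1) ∈ K(θ_i)^{×2}`. -/
def SystemOfForms.SquareAt {n : ℕ} (S : SystemOfForms K n) (i : Fin n) : Prop :=
  if ∃ c : K, (S.F i).map (algebraMap (𝓞 K) K) = MvPolynomial.C c * MvPolynomial.X 1 then
    ∃ c : K, c ≠ 0 ∧
      c ^ 2 = MvPolynomial.eval ![(1 : K), 0] ((S.G i).map (algebraMap (𝓞 K) K))
  else
    ∃ θ : AlgebraicClosure K,
      MvPolynomial.eval ![θ, 1]
        (((S.F i).map (algebraMap (𝓞 K) K)).map (algebraMap K (AlgebraicClosure K))) = 0 ∧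
      ∃ y : AlgebraicClosure K, y ∈ IntermediateField.adjoin K {θ} ∧ y ≠ 0 ∧
        y ^ 2 = MvPolynomial.eval ![θ, 1]
          (((S.G i).map (algebraMap (𝓞 K) K)).map (algebraMap K (AlgebraicClosure K)))

/-- The rank `ρ(𝔉) = #{i : G_i(𝛉_i) ∈ K(𝛉_i)^{×2}}`. -/
def SystemOfForms.rank {n : ℕ} (S : SystemOfForms K n) : ℕ :=
  (Finset.univ.filter (fun i => SystemOfForms.SquareAt K S i)).card

/-- The complexity `c(𝔉) = ∑_{i : G_i(𝛉_i) ∉ K(𝛉_i)^{×2}} deg F_i`. -/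
def SystemOfForms.complexity {n : ℕ} (S : SystemOfForms K n) : ℕ :=
  ∑ i ∈ Finset.univ.filter (fun i => ¬ SystemOfForms.SquareAt K S i), S.dF i

/-- Data of a region `D = ∏_{v ∣ ∞} D_v` where each `D_v ⊆ K_v²` is a compact ball of
positive radius. -/
structure BoxData where
  ctrR : {w : InfinitePlace K // w.IsReal} → ℝ × ℝ
  radR : {w : InfinitePlace K // w.IsReal} → ℝ
  ctrC : {w : InfinitePlace K // w.IsComplex} → ℂ × ℂ
  radC : {w : InfinitePlace K // w.IsComplex} → ℝ
  radR_pos : ∀ w, 0 < radR w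
  radC_pos : ∀ w, 0 < radC w

/-- The region `D ⊆ K_∞²` determined by the ball data. -/
def BoxData.D (B : BoxData K) : Set (KInfty K × KInfty K) :=
  {p | (∀ w, Real.sqrt ((p.1.1 w - (B.ctrR w).1) ^ 2 + (p.2.1 w - (B.ctrR w).2) ^ 2)
          ≤ B.radR w) ∧
       (∀ w, Real.sqrt (‖p.1.2 w - (B.ctrC w).1‖ ^ 2 + ‖p.2.2 w - (B.ctrC w).2‖ ^ 2)
          ≤ B.radC w)}

/-- A triplet `P = (D, (σ,τ), 𝔴)` for the fixed ideal `𝔯`: `D` is a product of compact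
balls, `σ O_K + τ O_K = 𝔯`, and `𝔴` is a nonzero ideal divisible by `2𝔯`. -/
structure Triplet (𝔯 : Ideal (𝓞 K)) where
  box : BoxData K
  σ : 𝓞 K
  τ : 𝓞 K
  w : Ideal (𝓞 K)
  hστ : Ideal.span {σ} ⊔ Ideal.span {τ} = 𝔯
  hw_ne : w ≠ ⊥
  hw_dvd : (Ideal.span {(2 : 𝓞 K)} * 𝔯) ∣ w

/-- The embedding `O_K → K_∞`. -/
def iota (s : 𝓞 K) : KInfty K := mixedEmbedding K (algebraMap (𝓞 K) K s)

/-- `M*(P,X)`: the `𝔯`-primitive points `(s,t) ∈ 𝔯² ∩ X^{1/m}D` with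
`(s,t) ≡ (σ,τ) mod 𝔴`. -/
def Mstar {𝔯 : Ideal (𝓞 K)} (P : Triplet K 𝔯) (X : ℝ) : Set (𝓞 K × 𝓞 K) :=
  {p | p.1 ∈ 𝔯 ∧ p.2 ∈ 𝔯 ∧
    (iota K p.1, iota K p.2) ∈ (X ^ ((1 : ℝ) / (Module.finrank ℚ K))) • P.box.D ∧
    p.1 - P.σ ∈ P.w ∧ p.2 - P.τ ∈ P.w ∧
    Ideal.span {p.1} ⊔ Ideal.span {p.2} = 𝔯}

/-- `𝔉`-admissibility of a triplet `P`. -/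
def Admissible {n : ℕ} {𝔯 : Ideal (𝓞 K)} (S : SystemOfForms K n) (P : Triplet K 𝔯) : Prop :=
  (∀ i, evalForm K (S.F i) P.σ P.τ ≠ 0) ∧
  ∀ X : ℝ, 1 ≤ X → ∀ p ∈ Mstar K P X, ∀ i,
    evalForm K (S.F i) p.1 p.2 ≠ 0 ∧
    jacobiSymK K (evalForm K (S.G i) p.1 p.2)
      (flatPart K P.w (Ideal.span {evalForm K (S.F i) p.1 p.2})) = 1

/-- Strong `𝔉`-admissibility: in addition `F_i(σ,τ) ≢ 0 mod 𝔴` and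
`v_𝔭(F_i(s,t)) = v_𝔭(F_i(σ,τ))` for all `𝔭 ∣ 𝔴`, all `i` and all `(s,t) ∈ M*(P,∞)`. -/
def StronglyAdmissible {n : ℕ} {𝔯 : Ideal (𝓞 K)} (S : SystemOfForms K n)
    (P : Triplet K 𝔯) : Prop :=
  Admissible K S P ∧ (∀ i, evalForm K (S.F i) P.σ P.τ ∉ P.w) ∧
  ∀ X : ℝ, 1 ≤ X → ∀ p ∈ Mstar K P X, ∀ i, ∀ q : Ideal (𝓞 K), q.IsPrime → q ∣ P.w →
    vP K q (Ideal.span {evalForm K (S.F i) p.1 p.2}) =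
      vP K q (Ideal.span {evalForm K (S.F i) P.σ P.τ})

/-- The summand
`r(𝔉,f,P;s,t) = ∏_{i=1}^n 1_f(F_i(s,t)^♭) · ∑_{𝔡_i ∣ F_i(s,t)^♭} (G_i(s,t)/𝔡_i)`. -/
def rFun {n : ℕ} {𝔯 : Ideal (𝓞 K)} (S : SystemOfForms K n) (f : Ideal (𝓞 K) → ℝ)
    (P : Triplet K 𝔯) (p : 𝓞 K × 𝓞 K) : ℝ :=
  ∏ i, (oneStar K f (flatPart K P.w (Ideal.span {evalForm K (S.F i) p.1 p.2})) *
    ∑ᶠ d ∈ {d : Ideal (𝓞 K) |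
        d ∣ flatPart K P.w (Ideal.span {evalForm K (S.F i) p.1 p.2})},
      (jacobiSymK K (evalForm K (S.G i) p.1 p.2) d : ℝ))

/-- The generalised divisor sum `D(𝔉,f,P;X) = ∑_{(s,t) ∈ M*(P,X)} r(𝔉,f,P;s,t)`. -/
def DSum {n : ℕ} {𝔯 : Ideal (𝓞 K)} (S : SystemOfForms K n) (f : Ideal (𝓞 K) → ℝ)
    (P : Triplet K 𝔯) (X : ℝ) : ℝ :=
  ∑ᶠ p ∈ Mstar K P X, rFun K S f P p

end

noncomputable section

variable (R : Type*) [CommRing R]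

/-- The Sylvester matrix of two polynomials `f, g`, regarded as polynomials of (formal)
degrees `m` and `n` respectively. -/
def sylvesterMatrix (m n : ℕ) (f g : Polynomial R) :
    Matrix (Fin (m + n)) (Fin (m + n)) R :=
  Matrix.of fun i j =>
    if (i : ℕ) < n then
      (if (i : ℕ) ≤ (j : ℕ) ∧ (j : ℕ) ≤ (i : ℕ) + m then f.coeff (m - ((j : ℕ) - (i : ℕ)))
       else 0)
    else
      (if (i : ℕ) - n ≤ (j : ℕ) ∧ (j : ℕ) ≤ ((i : ℕ) - n) + n then
        g.coeff (n - ((j : ℕ) - ((i : ℕ) - n)))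
       else 0)

/-- The resultant of two binary forms of degrees `m` and `n`: the determinant of the
Sylvester matrix of their dehomogenizations `F(x,1)`, `G(x,1)` taken with formal degrees
`m` and `n`. -/
def binaryResultant (m n : ℕ) (F G : MvPolynomial (Fin 2) R) : R :=
  (sylvesterMatrix R m n
    (MvPolynomial.aeval ![Polynomial.X, 1] F)
    (MvPolynomial.aeval ![Polynomial.X, 1] G)).det

end

/-! ### Binary forms and their dehomogenizations -/

theorem natDegree_dehomogenize_le {R : Type*} [CommRing R] {P : MvPolynomial (Fin 2) R} {d : ℕ}
    (hP : P.IsHomogeneous d) :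
    (MvPolynomial.aeval ![(Polynomial.X : Polynomial R), 1] P).natDegree ≤ d := by
  rw [P.as_sum, map_sum]
  refine Polynomial.natDegree_sum_le_of_forall_le _ _ fun m hm => ?_
  have h1 := hP.degree_eq_sum_deg_support hm
  rw [MvPolynomial.aeval_monomial, Finsupp.prod_fintype _ _ (by simp), Fin.prod_univ_two]
  simp only [Matrix.cons_val_zero, Matrix.cons_val_one, one_pow, mul_one,
    Polynomial.algebraMap_eq]
  refine (Polynomial.natDegree_C_mul_X_pow_le _ _).trans ?_
  rw [← Finsupp.degree_apply, Finsupp.degree_eq_sum, Fin.sum_univ_two] at h1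
  exact h1 ▸ Nat.le_add_right _ _

/-- If `P` is a form of degree `d` and `φ t ≠ 0`, then `P(s,t) = t ^ d * P(s/t, 1)` after applying
the ring homomorphism `φ` to a field. -/
theorem map_eval_form {R κ : Type*} [CommRing R] [Field κ] (φ : R →+* κ)
    {P : MvPolynomial (Fin 2) R} {d : ℕ} (hP : P.IsHomogeneous d) (s t : R) (ht : φ t ≠ 0) :
    φ (MvPolynomial.eval ![s, t] P) =
      ((MvPolynomial.aeval ![(Polynomial.X : Polynomial R), 1] P).map φ).eval (φ s / φ t) *
        φ t ^ d := by
  have h1 := Polynomial.homogenize_eq_of_isHomogeneous hP rfl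
  have h2 : φ (MvPolynomial.eval ![s, t] P) =
      MvPolynomial.eval ![φ s, φ t] (MvPolynomial.map φ P) := by
    rw [MvPolynomial.eval_map, ← MvPolynomial.eval₂_id, ← MvPolynomial.coe_eval₂Hom,
      ← RingHom.comp_apply, MvPolynomial.comp_eval₂Hom, MvPolynomial.coe_eval₂Hom]
    congr 1
    ext i
    fin_cases i <;> simp
  rw [h2]
  nth_rewrite 1 [← h1]
  rw [← Polynomial.homogenize_map, Polynomial.eval_homogenize _ _ (by simpa using ht)]
  · simp
  · exact Polynomial.natDegree_map_le.trans (natDegree_dehomogenize_le hP)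

theorem eval_form_zero {R : Type*} [CommRing R]
    {P : MvPolynomial (Fin 2) R} {d : ℕ} (hP : P.IsHomogeneous d) (s : R) :
    MvPolynomial.eval ![s, 0] P = s ^ d * MvPolynomial.eval ![1, 0] P := by
  rw [MvPolynomial.eval_eq', MvPolynomial.eval_eq', Finset.mul_sum]
  refine Finset.sum_congr rfl fun m hm => ?_
  have h1 := hP.degree_eq_sum_deg_support hm
  rw [← Finsupp.degree_apply, Finsupp.degree_eq_sum, Fin.sum_univ_two] at h1
  subst h1
  simp only [Fin.prod_univ_two, Matrix.cons_val_zero, Matrix.cons_val_one, one_pow, one_mul]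
  rcases Nat.eq_zero_or_pos (m 1) with h | h
  · rw [h]; simp; ring
  · rw [zero_pow h.ne']; simp

/-- The dehomogenization of an irreducible form divides every polynomial vanishing at one of its
roots `θ`: a factorization `minpoly θ * q` of it homogenizes to one of the form, so `q` is a
unit. -/
theorem dehomogenize_dvd_of_root {k L : Type*} [Field k] [Field L] [Algebra k L]
    {P : MvPolynomial (Fin 2) k} {d : ℕ} (hP : P.IsHomogeneous d) (hirr : Irreducible P)
    {θ : L} (hint : IsIntegral k θ)
    (hθ : Polynomial.aeval θ (MvPolynomial.aeval ![(Polynomial.X : Polynomial k), 1] P) = 0)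
    {g : Polynomial k} (hg : Polynomial.aeval θ g = 0) :
    MvPolynomial.aeval ![(Polynomial.X : Polynomial k), 1] P ∣ g := by
  obtain ⟨q, hq⟩ := minpoly.dvd k θ hθ
  set f := MvPolynomial.aeval ![(Polynomial.X : Polynomial k), 1] P with hf
  have hP' : f.homogenize d = P := Polynomial.homogenize_eq_of_isHomogeneous hP hf.symm
  have hf0 : f ≠ 0 := by
    rintro h
    rw [h] at hP'
    exact hirr.ne_zero (by simpa using hP'.symm)
  have hp0 : minpoly k θ ≠ 0 := minpoly.ne_zero hint
  have hq0 : q ≠ 0 := by rintro rfl; exact hf0 (by rw [hq, mul_zero])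
  have hdeg : (minpoly k θ).natDegree + q.natDegree ≤ d := by
    rw [← Polynomial.natDegree_mul hp0 hq0, ← hq]
    exact natDegree_dehomogenize_le hP
  have hsplit : P = (minpoly k θ).homogenize (minpoly k θ).natDegree *
      q.homogenize (d - (minpoly k θ).natDegree) := by
    rw [← Polynomial.homogenize_mul _ _ le_rfl (by omega), ← hq, ← hP']
    congr 1; omega
  have hqu : IsUnit q := by
    rcases hirr.isUnit_or_isUnit hsplit with h | h
    · have := h.map (MvPolynomial.aeval ![(Polynomial.X : Polynomial k), 1])
      rw [Polynomial.aeval_homogenize_X_one _ le_rfl] at this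
      exact absurd this (minpoly.not_isUnit k θ)
    · have := h.map (MvPolynomial.aeval ![(Polynomial.X : Polynomial k), 1])
      rwa [Polynomial.aeval_homogenize_X_one _ (by omega)] at this
  rw [hq]
  exact (hqu.mul_right_dvd).2 (minpoly.dvd k θ hg)

/-! ### Integral polynomial identities expressing that `g(θ)` is a nonzero square -/

/-- Clearing denominators: if over the fraction field `g` is a square modulo `f` and is coprime
to `f`, both facts are witnessed by identities over the base domain, at the cost of nonzero
constants `D` and `E`. -/
theorem exists_integral_identities {A k : Type*} [CommRing A] [IsDomain A] [Field k] [Algebra A k]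
    [IsFractionRing A k] (f g : Polynomial A) (h q a b : Polynomial k)
    (h1 : h ^ 2 - g.map (algebraMap A k) = f.map (algebraMap A k) * q)
    (h2 : a * f.map (algebraMap A k) + b * g.map (algebraMap A k) = 1) :
    ∃ D E : A, D ≠ 0 ∧ E ≠ 0 ∧ ∃ H Q U V : Polynomial A,
      Polynomial.C (D ^ 2) * g = H ^ 2 - f * Q ∧ U * f + V * g = Polynomial.C E := by
  have key : ∀ p : Polynomial k, ∃ c : A, c ≠ 0 ∧ ∃ P : Polynomial A,
      P.map (algebraMap A k) = Polynomial.C (algebraMap A k c) * p := by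
    intro p
    obtain ⟨c, hc, hP⟩ := IsLocalization.integerNormalization_spec (nonZeroDivisors A) p
    refine ⟨c, nonZeroDivisors.ne_zero hc, _, hP.trans ?_⟩
    rw [← Polynomial.smul_eq_C_mul, algebraMap_smul]
  obtain ⟨c1, hc1, H, hH⟩ := key h
  obtain ⟨c2, hc2, Q, hQ⟩ := key q
  obtain ⟨c3, hc3, U, hU⟩ := key a
  obtain ⟨c4, hc4, V, hV⟩ := key b
  have hinj := Polynomial.map_injective (algebraMap A k) (IsFractionRing.injective A k)
  refine ⟨c1 * c2, c3 * c4, mul_ne_zero hc1 hc2, mul_ne_zero hc3 hc4,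
    Polynomial.C c2 * H, Polynomial.C (c1 ^ 2 * c2) * Q, Polynomial.C c4 * U,
    Polynomial.C c3 * V, hinj ?_, hinj ?_⟩
  · simp only [Polynomial.map_mul, Polynomial.map_sub, Polynomial.map_pow, Polynomial.map_C, hH, hQ,
      map_mul, map_pow]
    linear_combination (-(Polynomial.C (algebraMap A k c1) * Polynomial.C (algebraMap A k c2)) ^ 2)
      * h1
  · simp only [Polynomial.map_mul, Polynomial.map_add, Polynomial.map_C, hU, hV, map_mul]
    linear_combination (Polynomial.C (algebraMap A k c3) * Polynomial.C (algebraMap A k c4)) * h2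

/-- At a prime not containing `D`, `E` or the leading coefficient `F(1,0)`, the identities reduce
to: `G(s,t)` is a nonzero square in the residue field whenever `F(s,t)` vanishes there and
`(s,t)` does not. -/
theorem legendreSymK_eq_one (K : Type*) [Field K] [NumberField K]
    {F G : MvPolynomial (Fin 2) (𝓞 K)} {d e : ℕ} (hF : F.IsHomogeneous d)
    (hG : G.IsHomogeneous e) (he : Even e) {D E : 𝓞 K} {H Q U V : Polynomial (𝓞 K)}
    (h1 : Polynomial.C (D ^ 2) * MvPolynomial.aeval ![(Polynomial.X : Polynomial (𝓞 K)), 1] G =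
      H ^ 2 - MvPolynomial.aeval ![(Polynomial.X : Polynomial (𝓞 K)), 1] F * Q)
    (h2 : U * MvPolynomial.aeval ![(Polynomial.X : Polynomial (𝓞 K)), 1] F +
      V * MvPolynomial.aeval ![(Polynomial.X : Polynomial (𝓞 K)), 1] G = Polynomial.C E)
    {p : Ideal (𝓞 K)} (hp : p.IsPrime) (hp0 : p ≠ ⊥) (hD : D ∉ p) (hE : E ∉ p)
    (hlead : evalForm K F 1 0 ∉ p) {s t : 𝓞 K} (hst : ¬ (s ∈ p ∧ t ∈ p))
    (hFst : evalForm K F s t ∈ p) : legendreSymK K (evalForm K G s t) p = 1 := by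
  have hmax : p.IsMaximal := hp.isMaximal hp0
  let : Field (𝓞 K ⧸ p) := Ideal.Quotient.field p
  set φ : 𝓞 K →+* 𝓞 K ⧸ p := Ideal.Quotient.mk p with hφ
  have mem : ∀ x : 𝓞 K, x ∈ p ↔ φ x = 0 := fun x => Ideal.Quotient.eq_zero_iff_mem.symm
  have ht : φ t ≠ 0 := by
    intro ht
    have hs : φ s ≠ 0 := fun hs => hst ⟨(mem s).2 hs, (mem t).2 ht⟩
    have h3 : φ (evalForm K F s t) = φ (evalForm K F s 0) := by
      have : ∀ x : 𝓞 K, φ (evalForm K F s x) =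
          MvPolynomial.eval₂ φ ![φ s, φ x] F := by
        intro x
        rw [evalForm, ← MvPolynomial.eval₂_id, ← MvPolynomial.coe_eval₂Hom,
          ← RingHom.comp_apply, MvPolynomial.comp_eval₂Hom, MvPolynomial.coe_eval₂Hom]
        congr 1
        ext i
        fin_cases i <;> simp
      rw [this, this, ht, map_zero]
    rw [mem, h3, evalForm, eval_form_zero hF, map_mul, map_pow] at hFst
    exact (mul_ne_zero (pow_ne_zero _ hs) fun h => hlead ((mem _).2 h)) hFst
  set x := φ s / φ t
  have e1 := map_eval_form φ hF s t ht
  have e2 := map_eval_form φ hG s t ht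
  rw [mem] at hFst hD hE
  rw [evalForm] at hFst
  rw [hFst] at e1
  have hf : ((MvPolynomial.aeval ![(Polynomial.X : Polynomial (𝓞 K)), 1] F).map φ).eval x = 0 :=
    (mul_eq_zero.1 e1.symm).resolve_right (pow_ne_zero _ ht)
  have h1' := congrArg (fun P : Polynomial (𝓞 K) => (P.map φ).eval x) h1
  have h2' := congrArg (fun P : Polynomial (𝓞 K) => (P.map φ).eval x) h2
  simp only [Polynomial.map_mul, Polynomial.map_sub, Polynomial.map_add, Polynomial.map_pow,
    Polynomial.map_C, Polynomial.eval_mul, Polynomial.eval_sub, Polynomial.eval_add,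
    Polynomial.eval_pow, Polynomial.eval_C, hf, zero_mul, mul_zero, sub_zero, zero_add,
    map_pow] at h1' h2'
  have hg : ((MvPolynomial.aeval ![(Polynomial.X : Polynomial (𝓞 K)), 1] G).map φ).eval x ≠ 0 := by
    intro h
    rw [h, mul_zero] at h2'
    exact hE h2'.symm
  obtain ⟨r, rfl⟩ := he
  obtain ⟨b, hb⟩ := Ideal.Quotient.mk_surjective ((H.map φ).eval x / φ D * φ t ^ r)
  rw [legendreSymK, if_neg, if_pos]
  · refine ⟨b, ?_⟩
    rw [mem, evalForm, map_sub, e2, map_pow, hφ, hb, sub_eq_zero, mul_pow, div_pow, ← h1']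
    field_simp
    ring
  · rw [mem, evalForm, e2]
    exact mul_ne_zero hg (pow_ne_zero _ ht)

/-! ### Primes dividing `𝔞^♭` -/

theorem flatPart_ne_bot (K : Type*) [Field K] [NumberField K] (w a : Ideal (𝓞 K)) :
    flatPart K w a ≠ 0 :=
  Multiset.prod_ne_zero_of_prime _ fun p hp =>
    prime_of_normalized_factor p (Multiset.mem_of_mem_filter hp)

/-- A prime in the factorization of a divisor of `𝔞^♭` is a factor of `𝔞` not dividing `𝔴`. For
`𝔞 = 0` this is vacuous, since then `𝔞^♭ = 1`. -/
theorem mem_of_dvd_flatPart (K : Type*) [Field K] [NumberField K] {w a d p : Ideal (𝓞 K)}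
    (hd : d ∣ flatPart K w a) (hp : p ∈ normalizedFactors d) :
    p ∈ normalizedFactors a ∧ ¬ p ∣ w := by
  have h0 := flatPart_ne_bot K w a
  have hle := (dvd_iff_normalizedFactors_le_normalizedFactors (ne_zero_of_dvd_ne_zero h0 hd) h0).1 hd
  have := Multiset.mem_of_le hle hp
  rw [flatPart, normalizedFactors_prod_of_prime fun q hq =>
    prime_of_normalized_factor q (Multiset.mem_of_mem_filter hq)] at this
  exact Multiset.mem_filter.1 this

/-- **Lemma 3.2.** Let `i` be an index of the system `𝔉` (no `F_j` proportional to `t`)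
such that `G_i(𝛉_i)` is a nonzero square in `K(𝛉_i)`. Then there is a finite set `S` of
nonzero prime ideals, depending only on `K, 𝔯, 𝔉`, such that whenever `𝔴` is divisible by
every prime of `S` and by `2𝔯·∏_j F_j(1,0)·∏_{j≠k} Res(F_j,F_k)`, one has, for all
`s, t ∈ O_K` with `s O_K + t O_K = 𝔯`,
`∑_{𝔡 ∣ F_i(s,t)^♭} (G_i(s,t)/𝔡) = τ_K(F_i(s,t)^♭)`. -/
theorem jacobi_sum_eq_divisor_count_of_square
    (K : Type*) [Field K] [NumberField K]
    (𝔯 : Ideal (𝓞 K)) (h𝔯 : 𝔯 ≠ ⊥)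
    (n : ℕ) (S : SystemOfForms K n)
    (hnot_t : ∀ j, evalForm K (S.F j) 1 0 ≠ 0)
    (i : Fin n) (hsq : SystemOfForms.SquareAt K S i) :
    ∃ Sbad : Finset (Ideal (𝓞 K)), (∀ p ∈ Sbad, p.IsPrime ∧ p ≠ ⊥) ∧
      ∀ w : Ideal (𝓞 K), w ≠ ⊥ →
        (∀ p ∈ Sbad, p ∣ w) →
        ((Ideal.span {(2 : 𝓞 K)} * 𝔯 * (∏ j, Ideal.span {evalForm K (S.F j) 1 0}) *
            ∏ jk ∈ (Finset.univ (α := Fin n × Fin n)).filter (fun jk => jk.1 ≠ jk.2),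
              Ideal.span {binaryResultant (𝓞 K) (S.dF jk.1) (S.dF jk.2)
                (S.F jk.1) (S.F jk.2)}) ∣ w) →
        ∀ s t : 𝓞 K, Ideal.span {s} ⊔ Ideal.span {t} = 𝔯 →
          (∑ᶠ d ∈ {d : Ideal (𝓞 K) |
              d ∣ flatPart K w (Ideal.span {evalForm K (S.F i) s t})},
            jacobiSymK K (evalForm K (S.G i) s t) d)
          = (Nat.card {d : Ideal (𝓞 K) //
              d ∣ flatPart K w (Ideal.span {evalForm K (S.F i) s t})} : ℤ) := by
  classical
  have hdeh : ∀ P : MvPolynomial (Fin 2) (𝓞 K),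
      MvPolynomial.aeval ![(Polynomial.X : Polynomial K), 1] (P.map (algebraMap (𝓞 K) K)) =
      (MvPolynomial.aeval ![(Polynomial.X : Polynomial (𝓞 K)), 1] P).map
        (algebraMap (𝓞 K) K) := by
    intro P
    induction P using MvPolynomial.induction_on with
    | C a => simp
    | add p q hp hq => simp only [map_add, Polynomial.map_add, hp, hq]
    | mul_X p j hp =>
      simp only [map_mul, Polynomial.map_mul, hp, MvPolynomial.map_X, MvPolynomial.aeval_X]
      fin_cases j <;> simp
  have hev : ∀ (P : MvPolynomial (Fin 2) K) (θ : AlgebraicClosure K),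
      MvPolynomial.eval ![θ, 1] (P.map (algebraMap K (AlgebraicClosure K))) =
        Polynomial.aeval θ (MvPolynomial.aeval ![(Polynomial.X : Polynomial K), 1] P) := by
    intro P θ
    induction P using MvPolynomial.induction_on with
    | C a => simp
    | add p q hp hq => simp only [map_add, hp, hq]
    | mul_X p j hp =>
      simp only [map_mul, hp, MvPolynomial.map_X, MvPolynomial.eval_X, MvPolynomial.aeval_X]
      fin_cases j <;> simp
  -- `F_i(1,0) ≠ 0`, so `F_i` is not proportional to `t` and `θ_i` is a genuine root.
  have hcase : ¬ ∃ c : K, (S.F i).map (algebraMap (𝓞 K) K) =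
      MvPolynomial.C c * MvPolynomial.X 1 := by
    rintro ⟨c, hc⟩
    have h1 := congrArg (MvPolynomial.eval ![(1 : K), 0]) hc
    apply hnot_t i
    apply FaithfulSMul.algebraMap_injective (𝓞 K) K
    rw [map_zero, evalForm, ← MvPolynomial.eval₂_id, ← MvPolynomial.coe_eval₂Hom,
      ← RingHom.comp_apply, MvPolynomial.comp_eval₂Hom, MvPolynomial.coe_eval₂Hom]
    rw [MvPolynomial.eval_map] at h1
    have h2 : (fun j => algebraMap (𝓞 K) K ((![1, 0] : Fin 2 → 𝓞 K) j)) = ![(1 : K), 0] := by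
      ext j
      fin_cases j <;> simp
    rw [RingHom.comp_id, h2, h1]
    simp
  rw [SystemOfForms.SquareAt, if_neg hcase] at hsq
  obtain ⟨θ, hθ, y, hy, hy0, hyG⟩ := hsq
  rw [hev] at hθ hyG
  have hint : IsIntegral K θ := Algebra.IsIntegral.isIntegral θ
  have hFK : ((S.F i).map (algebraMap (𝓞 K) K)).IsHomogeneous (S.dF i) := (S.F_homog i).map _
  have hdvd := fun {g : Polynomial K} (hg : Polynomial.aeval θ g = 0) =>
    dehomogenize_dvd_of_root hFK (S.F_irred i) hint hθ hg
  obtain ⟨h, rfl⟩ : ∃ h : Polynomial K, Polynomial.aeval θ h = y := by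
    rw [← IntermediateField.mem_toSubalgebra,
      IntermediateField.adjoin_simple_toSubalgebra_of_isAlgebraic hint.isAlgebraic,
      Algebra.adjoin_singleton_eq_range_aeval] at hy
    exact hy
  obtain ⟨q, hq⟩ := hdvd (g := h ^ 2 - MvPolynomial.aeval ![(Polynomial.X : Polynomial K), 1]
    ((S.G i).map (algebraMap (𝓞 K) K))) (by rw [map_sub, map_pow, hyG, sub_self])
  -- The dehomogenization of `F_i` divides the minimal polynomial, which is prime and does not
  -- divide `g`, because `g(θ) = y² ≠ 0`.
  have hcop : IsCoprime (MvPolynomial.aeval ![(Polynomial.X : Polynomial K), 1]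
      ((S.F i).map (algebraMap (𝓞 K) K))) (MvPolynomial.aeval ![(Polynomial.X : Polynomial K), 1]
      ((S.G i).map (algebraMap (𝓞 K) K))) := by
    refine IsCoprime.of_isCoprime_of_dvd_left ?_ (hdvd (minpoly.aeval K θ))
    refine ((minpoly.irreducible hint).coprime_iff_not_dvd).2 fun hd => ?_
    rw [minpoly.dvd_iff, ← hyG] at hd
    exact pow_ne_zero 2 hy0 hd
  obtain ⟨a, b, hab⟩ := hcop
  rw [hdeh] at hq hab
  rw [hdeh] at hq hab
  obtain ⟨D, E, hD, hE, H, Q, U, V, h1, h2⟩ := exists_integral_identities _ _ h q a b hq hab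
  refine ⟨(normalizedFactors (Ideal.span {D * E})).toFinset, fun p hp => ?_, ?_⟩
  · have hp' := prime_of_normalized_factor p (Multiset.mem_toFinset.1 hp)
    exact ⟨Ideal.isPrime_of_prime hp', hp'.ne_zero⟩
  intro w hw hSw hww s t hst
  have hone : ∀ d : Ideal (𝓞 K), d ∣ flatPart K w (Ideal.span {evalForm K (S.F i) s t}) →
      jacobiSymK K (evalForm K (S.G i) s t) d = 1 := by
    intro d hd
    refine Multiset.prod_eq_one fun z hz => ?_
    obtain ⟨p, hp, rfl⟩ := Multiset.mem_map.1 hz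
    obtain ⟨hpF, hpw⟩ := mem_of_dvd_flatPart K hd hp
    have hpp := prime_of_normalized_factor p hp
    have hprime := Ideal.isPrime_of_prime hpp
    have hDE : D * E ∉ p := fun hmem => hpw <| hSw p <| by
      rw [Multiset.mem_toFinset, mem_normalizedFactors_iff (by
        simpa using And.intro hD hE)]
      exact ⟨hpp, Ideal.dvd_span_singleton.2 hmem⟩
    have hndvd : ∀ c : Ideal (𝓞 K), c ∣ Ideal.span {(2 : 𝓞 K)} * 𝔯 *
        (∏ j, Ideal.span {evalForm K (S.F j) 1 0}) → ¬ p ∣ c :=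
      fun c hc hpc => hpw (hpc.trans (hc.trans ((dvd_mul_right _ _).trans hww)))
    refine legendreSymK_eq_one K (S.F_homog i) (S.G_homog i) (S.dG_even i) h1 h2 hprime
      hpp.ne_zero (fun hm => hDE (p.mul_mem_right _ hm)) (fun hm => hDE (p.mul_mem_left _ hm))
      ?_ ?_ (Ideal.dvd_span_singleton.1 (dvd_of_mem_normalizedFactors hpF))
    · rw [← Ideal.dvd_span_singleton]
      exact hndvd _ (dvd_mul_of_dvd_right (Finset.dvd_prod_of_mem
        (fun j => Ideal.span {evalForm K (S.F j) 1 0}) (Finset.mem_univ i)) _)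
    · rintro ⟨hs, ht⟩
      refine hndvd 𝔯 (dvd_mul_of_dvd_left (dvd_mul_left _ _) _) (Ideal.dvd_iff_le.2 ?_)
      rw [← hst]
      exact sup_le ((Ideal.span_singleton_le_iff_mem p).2 hs)
        ((Ideal.span_singleton_le_iff_mem p).2 ht)
  rw [finsum_mem_congr (s := {d : Ideal (𝓞 K) |
    d ∣ flatPart K w (Ideal.span {evalForm K (S.F i) s t})}) rfl hone]
  have hfin : {d : Ideal (𝓞 K) |
      d ∣ flatPart K w (Ideal.span {evalForm K (S.F i) s t})}.Finite :=
    let := fintypeSubtypeDvd _ (flatPart_ne_bot K w (Ideal.span {evalForm K (S.F i) s t}))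
    Set.finite_coe_iff.1 (Finite.of_fintype {d : Ideal (𝓞 K) //
      d ∣ flatPart K w (Ideal.span {evalForm K (S.F i) s t})})
  rw [finsum_mem_eq_finite_toFinset_sum _ hfin, Finset.sum_const, nsmul_one,
    ← Set.ncard_eq_toFinset_card _ hfin]
  rfl
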